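/- Let r be a positive integer, let p' be a positive real number, let k₀ be an even integer with |k₀|·|π/2 − p'| < 1/10^{r+1}, and let n be a natural number with (0.8)^{n+1}/(n+1)! < 1/10^{r+1}. Then for every real number x with |x − k₀·p'| ≤ 0.8, one has |sin x − (−1)^{k₀/2}·P_n(x − k₀·p')| < 1/10^r. -/

import Mathlib

/-!
Write `k₀ = 2j`. Then `sin x = (-1)^j sin (x - jπ)`, and since sine is `1`-Lipschitz, replacing
`jπ = k₀ π/2` by `k₀ p'` costs at most `|k₀| |π/2 - p'| < 10^-(r+1)`. It remains to compare
`sin y` with `sinTaylor n y` for `|y| ≤ 0.8`. The polynomial is the imaginary part of the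
exponential partial sum `∑_{m ≤ n} (iy)^m / m!` (`im_exp_partial_sum`), so the tail bound
`Complex.exp_bound` gives an error of at most `2 |y|^(n+1) / (n+1)!` (`abs_sin_sub_sinTaylor_le`).
The factor `2` is not sharp, but the total `3 / 10^(r+1)` is still below `1 / 10^r`.
-/

open Real

/-- Taylor polynomial of sine: `P n y = ∑_{m=0}^{⌊(n-1)/2⌋} (-1)^m y^(2m+1)/(2m+1)!`
(empty sum when `n = 0`). -/
noncomputable def sinTaylor (n : ℕ) (y : ℝ) : ℝ :=
  ∑ m ∈ Finset.range ((n + 1) / 2),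
    (-1 : ℝ) ^ m * y ^ (2 * m + 1) / (Nat.factorial (2 * m + 1))

lemma im_exp_partial_sum (n : ℕ) (y : ℝ) :
    (∑ m ∈ Finset.range (n + 1), ((y : ℂ) * Complex.I) ^ m / (Nat.factorial m : ℂ)).im
      = sinTaylor n y := by
  induction n with
  | zero => simp [sinTaylor]
  | succ n ih =>
    rw [Finset.sum_range_succ, Complex.add_im, ih]
    rcases Nat.even_or_odd' n with ⟨j, rfl | rfl⟩
    · have h1 : (2 * j + 1) / 2 = j := by omega
      have h2 : (2 * j + 1 + 1) / 2 = j + 1 := by omega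
      have h3 : ((y : ℂ) * Complex.I) ^ (2 * j + 1) / (Nat.factorial (2 * j + 1) : ℂ)
          = (((-1 : ℝ) ^ j * y ^ (2 * j + 1) / (Nat.factorial (2 * j + 1)) : ℝ) : ℂ)
            * Complex.I := by
        rw [mul_pow, pow_succ Complex.I, pow_mul Complex.I, Complex.I_sq]
        push_cast
        ring
      rw [h3, Complex.im_ofReal_mul, Complex.I_im, mul_one]
      simp only [sinTaylor, h1, h2, Finset.sum_range_succ]
    · have h1 : (2 * j + 1 + 1) / 2 = j + 1 := by omega
      have h2 : (2 * j + 1 + 1 + 1) / 2 = j + 1 := by omega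
      have h3 : ((y : ℂ) * Complex.I) ^ (2 * j + 1 + 1) / (Nat.factorial (2 * j + 1 + 1) : ℂ)
          = (((-1 : ℝ) ^ (j + 1) * y ^ (2 * j + 1 + 1)
              / (Nat.factorial (2 * j + 1 + 1)) : ℝ) : ℂ) := by
        rw [mul_pow, show 2 * j + 1 + 1 = 2 * (j + 1) by ring, pow_mul Complex.I, Complex.I_sq]
        push_cast
        ring
      rw [h3, Complex.ofReal_im, add_zero]
      simp only [sinTaylor, h1, h2]

lemma abs_sin_sub_sinTaylor_le (n : ℕ) {y : ℝ} (hy : |y| ≤ 1) :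
    |Real.sin y - sinTaylor n y| ≤ 2 * (|y| ^ (n + 1) / (Nat.factorial (n + 1))) := by
  have hnorm : ‖(y : ℂ) * Complex.I‖ = |y| := by simp
  have hb := Complex.exp_bound (x := (y : ℂ) * Complex.I) (by rwa [hnorm]) n.succ_pos
  rw [hnorm] at hb
  have him := (Complex.abs_im_le_norm _).trans hb
  rw [Complex.sub_im, Complex.exp_ofReal_mul_I_im, Nat.succ_eq_add_one,
    im_exp_partial_sum] at him
  refine him.trans ?_
  have hf : (0 : ℝ) < Nat.factorial (n + 1) := by positivity
  have hq : ((n + 1 + 1 : ℝ)) * ((Nat.factorial (n + 1) : ℝ) * (n + 1))⁻¹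
      ≤ 2 / Nat.factorial (n + 1) := by
    rw [← div_eq_mul_inv, div_le_div_iff₀ (by positivity) hf]
    nlinarith [mul_nonneg hf.le (Nat.cast_nonneg (α := ℝ) n)]
  calc _ ≤ |y| ^ (n + 1) * (2 / (Nat.factorial (n + 1) : ℝ)) := by
        push_cast
        gcongr
    _ = _ := by ring

theorem sin_uniform_accuracy_even (r : ℕ) (hr : 1 ≤ r)
    (p' : ℝ) (hp' : 0 < p')
    (k₀ : ℤ) (hk₀even : Even k₀)
    (hk₀ : |(k₀ : ℝ)| * |Real.pi / 2 - p'| < 1 / 10 ^ (r + 1))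
    (n : ℕ) (hn : (0.8 : ℝ) ^ (n + 1) / (Nat.factorial (n + 1)) < 1 / 10 ^ (r + 1)) :
    ∀ x : ℝ, |x - k₀ * p'| ≤ 0.8 →
      |Real.sin x - (-1 : ℝ) ^ (k₀ / 2) * sinTaylor n (x - k₀ * p')| < 1 / 10 ^ r := by
  intro x hx
  obtain ⟨j, rfl⟩ := hk₀even
  have hj : (j + j) / 2 = j := by omega
  rw [hj]
  set y : ℝ := x - ((j + j : ℤ) : ℝ) * p' with hy
  have hsin : Real.sin x = (-1 : ℝ) ^ j * Real.sin (x - j * Real.pi) := by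
    conv_lhs => rw [show x = (x - j * Real.pi) + j * Real.pi by ring]
    rw [Real.sin_add_int_mul_pi]
  have hshift : |Real.sin (x - j * Real.pi) - Real.sin y| < 1 / 10 ^ (r + 1) := by
    refine lt_of_le_of_lt (Real.abs_sin_sub_sin_le _ _) ?_
    rw [← abs_mul] at hk₀
    have hdiff : y - (x - j * Real.pi) = ((j + j : ℤ) : ℝ) * (Real.pi / 2 - p') := by
      rw [hy]
      push_cast
      ring
    rwa [abs_sub_comm, hdiff]
  have htaylor : |Real.sin y - sinTaylor n y| < 2 * (1 / 10 ^ (r + 1)) := by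
    refine lt_of_le_of_lt (abs_sin_sub_sinTaylor_le n (hx.trans (by norm_num))) ?_
    refine lt_of_le_of_lt ?_ (mul_lt_mul_of_pos_left hn two_pos)
    gcongr
  have htri := abs_sub_le (Real.sin (x - j * Real.pi)) (Real.sin y) (sinTaylor n y)
  have hr10 : (1 : ℝ) / 10 ^ r = 10 * (1 / 10 ^ (r + 1)) := by
    rw [pow_succ]
    field_simp
  have hpos : (0 : ℝ) < 1 / 10 ^ (r + 1) := by positivity
  rw [hsin, ← mul_sub, abs_mul, abs_zpow, abs_neg, abs_one, one_zpow, one_mul, hr10]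
  linarith
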